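/- arXiv:1308.6260 — 2 statements merged into one kernel-verified Lean document; each statement's English description precedes it below -/
import Mathlib

section
/- (Corollary: the state |FS, p0⟩ is the ground state of the noninteracting Hamiltonian in its total-momentum sector.) Let N be an odd integer with N ≥ 3, let L, m_i, m_h be positive reals, set δk = 2π/L, k_F = δk(N−1)/2, q0 = min(k_F, (m_i/m_h)·k_F), and C = (k_F²/(6m_h))·N(N+1)/(N−1). Let p0 be a real number with 0 ≤ p0 < q0. Let S be a finite set of integers with card S = N, define E⁰_K = (δk²/(2m_h))·Σ_{n∈S} n² − C, and let k be a real number such that δk·(Σ_{n∈S} n) + k = p0. Then E⁰_K + k²/(2m_i) ≥ p0²/(2m_i); i.e., no noninteracting eigenstate with total momentum p0 has energy below that of the Fermi sea together with the impurity plane wave of momentum p0. -/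
/-- The `N`-periodic function equal to `x (N - x)` on `[0, N)`. -/
def periodicParabola (N x : ℤ) : ℤ := (x % N) * (N - x % N)

theorem periodicParabola_nonneg {N : ℤ} (hN : 0 < N) (x : ℤ) : 0 ≤ periodicParabola N x := by
  have h₁ := Int.emod_nonneg x hN.ne'
  have h₂ := Int.emod_lt_of_pos x hN
  exact mul_nonneg h₁ (by omega)

theorem periodicParabola_eq_of_mem {N x : ℤ} (h₁ : 0 ≤ x) (h₂ : x < N) :
    periodicParabola N x = x * (N - x) := by
  rw [periodicParabola, Int.emod_eq_of_lt h₁ h₂]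

theorem mul_sub_le_periodicParabola {N : ℤ} (hN : 0 < N) (x : ℤ) :
    x * (N - x) ≤ periodicParabola N x := by
  by_cases h : 0 ≤ x ∧ x < N
  · exact (periodicParabola_eq_of_mem h.1 h.2).ge
  · refine le_trans ?_ (periodicParabola_nonneg hN x)
    rcases lt_or_ge x 0 with hx | hx
    · exact mul_nonpos_of_nonpos_of_nonneg hx.le (by omega)
    · exact mul_nonpos_of_nonneg_of_nonpos hx (by omega)

theorem periodicParabola_add_le {N : ℤ} (hN : 0 < N) (x y : ℤ) :
    periodicParabola N (x + y) ≤ periodicParabola N x + periodicParabola N y := by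
  unfold periodicParabola
  rw [Int.add_emod]
  have hr := Int.emod_nonneg x hN.ne'
  have hr' := Int.emod_lt_of_pos x hN
  have hs := Int.emod_nonneg y hN.ne'
  have hs' := Int.emod_lt_of_pos y hN
  generalize x % N = r at *
  generalize y % N = s at *
  rcases lt_or_ge (r + s) N with h | h
  · rw [Int.emod_eq_of_lt (by omega) h]
    nlinarith [mul_nonneg hr hs]
  · have : (r + s) % N = r + s - N := by
      rw [← Int.sub_emod_right, Int.emod_eq_of_lt (by omega) (by omega)]
    rw [this]
    nlinarith [mul_nonneg (sub_nonneg.2 hr'.le) (sub_nonneg.2 hs'.le)]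

theorem periodicParabola_neg {N : ℤ} (hN : 0 < N) (x : ℤ) :
    periodicParabola N (-x) = periodicParabola N x := by
  unfold periodicParabola
  have hr := Int.emod_nonneg x hN.ne'
  have hr' := Int.emod_lt_of_pos x hN
  have hx := Int.emod_add_mul_ediv x N
  rcases hr.eq_or_lt with h | h
  · have : (-x) % N = 0 := Int.emod_eq_zero_of_dvd ((Int.dvd_of_emod_eq_zero h.symm).neg_right)
    rw [this, ← h]
  · have : (-x) % N = N - x % N := by
      have h' : -x = (N - x % N) + N * (-(x / N) - 1) := by linarith
      conv_lhs => rw [h']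
      rw [Int.add_mul_emod_self_left, Int.emod_eq_of_lt (by omega) (by omega)]
    rw [this]
    ring

/-- Moving a fermion from inside the Fermi sea to above it costs at least the periodic parabola
evaluated at the momentum transfer. -/
theorem periodicParabola_sub_le_of_lt {m p h : ℤ} (hm : 0 ≤ m) (hp : m < p) (h₁ : -m ≤ h)
    (h₂ : h ≤ m) : periodicParabola (2 * m + 1) (p - h) ≤ p ^ 2 - h ^ 2 := by
  rcases lt_or_ge (p - h) (2 * m + 1) with hd | hd
  · rw [periodicParabola_eq_of_mem (by omega) hd]
    nlinarith [mul_nonneg (show 0 ≤ p - h by omega) (show 0 ≤ 2 * p - (2 * m + 1) by omega)]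
  · unfold periodicParabola
    have hN : 0 < 2 * m + 1 := by omega
    have hr := Int.emod_nonneg (p - h) hN.ne'
    have hr' := Int.emod_lt_of_pos (p - h) hN
    have hle : (p - h) % (2 * m + 1) ≤ p - h - (2 * m + 1) := by
      rw [← Int.sub_emod_right]
      have h₀ : 0 ≤ p - h - (2 * m + 1) := by omega
      have h₃ := Int.emod_add_mul_ediv (p - h - (2 * m + 1)) (2 * m + 1)
      have h₄ := mul_nonneg hN.le (Int.ediv_nonneg h₀ hN.le)
      linarith
    generalize (p - h) % (2 * m + 1) = r at *
    have : (2 * m + 1) * r ≤ (p - h) * (p + h) :=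
      mul_le_mul hd (by omega) hr (by omega)
    nlinarith [sq_nonneg r]

theorem periodicParabola_sub_le {m p h : ℤ} (hm : 0 ≤ m) (hp : m < |p|) (hh : |h| ≤ m) :
    periodicParabola (2 * m + 1) (p - h) ≤ p ^ 2 - h ^ 2 := by
  rw [abs_le] at hh
  rcases lt_abs.1 hp with hp | hp
  · exact periodicParabola_sub_le_of_lt hm hp hh.1 hh.2
  · have := periodicParabola_sub_le_of_lt hm hp (h := -h) (by omega) (by omega)
    rw [show -p - -h = -(p - h) by ring, periodicParabola_neg (by omega)] at this
    simpa using this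

theorem periodicParabola_sum_sub_sum_le {m : ℤ} (hm : 0 ≤ m) (A B : Finset ℤ)
    (hcard : A.card = B.card) (hA : ∀ p ∈ A, m < |p|) (hB : ∀ h ∈ B, |h| ≤ m) :
    periodicParabola (2 * m + 1) (∑ p ∈ A, p - ∑ h ∈ B, h) ≤
      ∑ p ∈ A, p ^ 2 - ∑ h ∈ B, h ^ 2 := by
  induction A using Finset.induction_on generalizing B with
  | empty =>
    have : B = ∅ := by simpa using hcard.symm
    simp [this, periodicParabola]
  | insert p A hpA ih =>
    rw [Finset.card_insert_of_notMem hpA] at hcard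
    obtain ⟨h, hh⟩ : B.Nonempty := Finset.card_pos.1 (by omega)
    have ih' := ih (B.erase h) (by rw [Finset.card_erase_of_mem hh]; omega)
      (fun q hq => hA q (Finset.mem_insert_of_mem hq))
      (fun q hq => hB q (Finset.mem_of_mem_erase hq))
    have hstep := periodicParabola_sub_le hm (hA p (Finset.mem_insert_self p A)) (hB h hh)
    have hadd := periodicParabola_add_le (show 0 < 2 * m + 1 by omega) (p - h)
      (∑ p ∈ A, p - ∑ h ∈ B.erase h, h)
    rw [Finset.sum_insert hpA, Finset.sum_insert hpA, ← Finset.add_sum_erase B _ hh,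
      ← Finset.add_sum_erase B (fun n => n ^ 2) hh]
    rw [show ∀ a b c d : ℤ, a + b - (c + d) = (a - c) + (b - d) by intros; ring]
    linarith

theorem Icc_neg_succ_succ (m : ℕ) :
    Finset.Icc (-((m + 1 : ℕ) : ℤ)) ((m + 1 : ℕ) : ℤ) =
      insert (-((m : ℤ) + 1)) (insert ((m : ℤ) + 1) (Finset.Icc (-(m : ℤ)) m)) := by
  ext x
  simp only [Finset.mem_Icc, Finset.mem_insert]
  push_cast
  omega

theorem sum_Icc_neg_self (m : ℕ) : ∑ n ∈ Finset.Icc (-(m : ℤ)) m, n = 0 := by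
  induction m with
  | zero => simp
  | succ m ih =>
    rw [Icc_neg_succ_succ, Finset.sum_insert, Finset.sum_insert, ih]
    · ring
    · simp
    · simp only [Finset.mem_insert, Finset.mem_Icc]; omega

theorem three_mul_sum_Icc_neg_self_sq (m : ℕ) :
    3 * ∑ n ∈ Finset.Icc (-(m : ℤ)) m, n ^ 2 = m * (m + 1) * (2 * m + 1) := by
  induction m with
  | zero => simp
  | succ m ih =>
    rw [Icc_neg_succ_succ, Finset.sum_insert, Finset.sum_insert, mul_add, mul_add, ih]
    · push_cast; ring
    · simp
    · simp only [Finset.mem_insert, Finset.mem_Icc]; omega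

/-- The excitation energy of a fermion configuration above the Fermi sea is bounded below by the
periodic parabola evaluated at its total momentum. -/
theorem periodicParabola_sum_le (m : ℕ) (S : Finset ℤ) (hS : S.card = 2 * m + 1) :
    3 * periodicParabola (2 * m + 1) (∑ n ∈ S, n) ≤
      3 * ∑ n ∈ S, n ^ 2 - m * (m + 1) * (2 * m + 1) := by
  set F := Finset.Icc (-(m : ℤ)) m with hF
  have hFcard : F.card = 2 * m + 1 := by
    rw [hF, Int.card_Icc]; omega
  have key := periodicParabola_sum_sub_sum_le (Int.natCast_nonneg m) (S \ F) (F \ S)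
    (Finset.card_sdiff_comm (hS.trans hFcard.symm))
    (fun p hp => by
      have hp' := (Finset.mem_sdiff.1 hp).2
      rw [hF, Finset.mem_Icc, ← abs_le] at hp'
      exact not_le.1 hp')
    (fun h hh => by
      have hh' := (Finset.mem_sdiff.1 hh).1
      rwa [hF, Finset.mem_Icc, ← abs_le] at hh')
  rw [Finset.sum_sdiff_sub_sum_sdiff, Finset.sum_sdiff_sub_sum_sdiff, sum_Icc_neg_self,
    sub_zero] at key
  have := three_mul_sum_Icc_neg_self_sq m
  linarith

/-- Corollary: `|FS, p0⟩` is the ground state of the noninteracting Hamiltonian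
in the total-momentum-`p0` sector. For `N` odd fermions on a ring with
`δk = 2π/L`, `k_F = δk (N−1)/2`, `q0 = min (k_F, (m_i/m_h) k_F)` and
`C = (k_F²/(6 m_h)) N(N+1)/(N−1)`, any noninteracting eigenstate `|K, k⟩`
(fermion configuration `S ⊂ ℤ`, `|S| = N`, impurity momentum `k`) with total
momentum `p0 ∈ [0, q0)` has energy `E⁰_K + k²/(2 m_i) ≥ p0²/(2 m_i)`, the
energy of the Fermi sea plus impurity plane wave `p0`. -/
theorem fermi_sea_plus_impurity_is_ground_state_in_sector
    (N : ℤ) (hN : 3 ≤ N) (hodd : Odd N)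
    (L m_i m_h : ℝ) (hL : 0 < L) (hmi : 0 < m_i) (hmh : 0 < m_h)
    (δk kF q0 C : ℝ)
    (hδk : δk = 2 * Real.pi / L)
    (hkF : kF = δk * (N - 1) / 2)
    (hq0 : q0 = min kF (m_i / m_h * kF))
    (hC : C = kF ^ 2 / (6 * m_h) * (N * (N + 1) / (N - 1)))
    (p0 : ℝ) (hp0_nonneg : 0 ≤ p0) (hp0_lt : p0 < q0)
    (S : Finset ℤ) (hcard : (S.card : ℤ) = N)
    (E0K k : ℝ)
    (hE0K : E0K = δk ^ 2 / (2 * m_h) * (∑ n ∈ S, (n : ℝ) ^ 2) - C)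
    (hmom : δk * (∑ n ∈ S, (n : ℝ)) + k = p0) :
    p0 ^ 2 / (2 * m_i) ≤ E0K + k ^ 2 / (2 * m_i) := by
  obtain ⟨j, hj⟩ := hodd
  obtain ⟨m, rfl⟩ := Int.eq_ofNat_of_zero_le (show 0 ≤ j by omega)
  have hm : (0 : ℝ) < m := by exact_mod_cast (show 0 < m by omega)
  have hδ : 0 < δk := by rw [hδk]; positivity
  have hNR : (N : ℝ) = 2 * m + 1 := by rw [hj]; push_cast; ring
  have hkF' : kF = δk * m := by rw [hkF, hNR]; ring
  have hC' : C = δk ^ 2 / (2 * m_h) * (m * (m + 1) * (2 * m + 1) / 3) := by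
    rw [hC, hkF', hNR]
    field_simp
    ring
  have hbound := periodicParabola_sum_le m S (by omega)
  have hpos : (0 : ℤ) < 2 * m + 1 := by omega
  have hQ : 0 ≤ 3 * ∑ n ∈ S, n ^ 2 - (m : ℤ) * (m + 1) * (2 * m + 1) :=
    le_trans (mul_nonneg (by norm_num) (periodicParabola_nonneg hpos _)) hbound
  have hQP : 3 * ((∑ n ∈ S, n) * (2 * m + 1 - ∑ n ∈ S, n)) ≤
      3 * ∑ n ∈ S, n ^ 2 - (m : ℤ) * (m + 1) * (2 * m + 1) :=
    le_trans (mul_le_mul_of_nonneg_left (mul_sub_le_periodicParabola hpos _) (by norm_num)) hbound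
  have hQR : (0 : ℝ) ≤ 3 * ∑ n ∈ S, (n : ℝ) ^ 2 - m * (m + 1) * (2 * m + 1) := by
    have := (Int.cast_le (R := ℝ)).2 hQ
    push_cast at this
    exact this
  have hQPR : 3 * ((∑ n ∈ S, (n : ℝ)) * (2 * m + 1 - ∑ n ∈ S, (n : ℝ))) ≤
      3 * ∑ n ∈ S, (n : ℝ) ^ 2 - m * (m + 1) * (2 * m + 1) := by
    have := (Int.cast_le (R := ℝ)).2 hQP
    push_cast at this
    exact this
  rw [hE0K, hC']
  generalize (∑ n ∈ S, (n : ℝ)) = P at *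
  generalize (∑ n ∈ S, (n : ℝ) ^ 2) = T at *
  obtain ⟨Q, hQdef⟩ : ∃ Q, Q = T - m * (m + 1) * (2 * m + 1) / 3 := ⟨_, rfl⟩
  have hQ0 : 0 ≤ Q := by linarith
  have hQ1 : P * (2 * m + 1 - P) ≤ Q := by linarith
  have hk : k = p0 - δk * P := by linarith
  have hlt := hp0_lt
  rw [hq0, lt_min_iff, hkF'] at hlt
  obtain ⟨hlt₁, hlt₂⟩ := hlt
  have hlt₂' : p0 * m_h < m_i * (δk * m) := by
    rwa [div_mul_eq_mul_div, lt_div_iff₀ hmh] at hlt₂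
  have main : 0 ≤ δk * m_i * Q + m_h * (δk * P ^ 2 - 2 * p0 * P) := by
    rcases le_or_gt P 0 with hP | hP
    · have : 0 ≤ p0 * -P := mul_nonneg hp0_nonneg (by linarith)
      have : 0 ≤ δk * P ^ 2 - 2 * p0 * P := by nlinarith [mul_nonneg hδ.le (sq_nonneg P)]
      positivity
    · have hsum : 2 * m * P ≤ Q + P ^ 2 := by nlinarith
      have hsum' := mul_le_mul_of_nonneg_left hsum hδ.le
      rcases le_total m_i m_h with hle | hle
      · have h₁ := mul_le_mul_of_nonneg_left hsum' hmi.le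
        have h₂ := mul_le_mul_of_nonneg_right hle (mul_nonneg hδ.le (sq_nonneg P))
        have h₃ := mul_le_mul_of_nonneg_right hlt₂'.le hP.le
        linarith
      · have h₁ := mul_le_mul_of_nonneg_left hsum' hmh.le
        have h₂ := mul_le_mul_of_nonneg_right hle (mul_nonneg hδ.le hQ0)
        have h₃ := mul_le_mul_of_nonneg_left (mul_le_mul_of_nonneg_right hlt₁.le hP.le) hmh.le
        linarith
  have hdiff : δk ^ 2 / (2 * m_h) * T - δk ^ 2 / (2 * m_h) * (m * (m + 1) * (2 * m + 1) / 3)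
      + k ^ 2 / (2 * m_i) - p0 ^ 2 / (2 * m_i) =
      δk * (δk * m_i * Q + m_h * (δk * P ^ 2 - 2 * p0 * P)) / (2 * m_h * m_i) := by
    rw [hk, hQdef]
    field_simp
    ring
  rw [← sub_nonneg, hdiff]
  positivity
end

section
/- (Abstract form of the main Theorem's lower bound, diagonal-ensemble version.) Let E be a finite-dimensional complex inner product space. Let H⁰, V, P : E → E be self-adjoint linear maps, and set H = H⁰ + V. Suppose (e_α) is an orthonormal basis of E consisting of joint eigenvectors: H⁰ e_α = ε_α e_α and P e_α = p_α e_α with real ε_α, p_α. Let ψ be a unit vector with H⁰ ψ = ε₀ ψ and P ψ = p0 ψ for reals ε₀, p0. Let λ > 0 and assume that p0 − p_α ≤ λ·(ε_α − ε₀) for every α. Let (Ψ_j) be an orthonormal basis of E with H Ψ_j = E_j Ψ_j for reals E_j, and define p_∞ = Σ_j |⟨ψ, Ψ_j⟩|² ⟨Ψ_j, P Ψ_j⟩. Then p_∞ ≥ p0 − λ·( ⟨ψ, V ψ⟩ − Σ_j |⟨ψ, Ψ_j⟩|² ⟨Ψ_j, V Ψ_j⟩ ). -/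
open scoped InnerProductSpace

/-- The expectation of an operator that is diagonal in an orthonormal basis, as the average of its
eigenvalues. -/
theorem OrthonormalBasis.re_inner_map_self_eq_sum
    {E : Type*} [NormedAddCommGroup E] [InnerProductSpace ℂ E] {ι : Type*} [Fintype ι]
    (b : OrthonormalBasis ι ℂ E) (A : E →ₗ[ℂ] E) (a : ι → ℝ)
    (hA : ∀ i, A (b i) = (a i : ℂ) • b i) (x : E) :
    (⟪x, A x⟫_ℂ).re = ∑ i, ‖⟪x, b i⟫_ℂ‖ ^ 2 * a i := by
  have hx : A x = ∑ i, (⟪b i, x⟫_ℂ * (a i : ℂ)) • b i := by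
    conv_lhs => rw [← b.sum_repr' x]
    simp only [map_sum, map_smul, hA, smul_smul]
  rw [hx, inner_sum, Complex.re_sum]
  refine Finset.sum_congr rfl fun i _ => ?_
  have h : ⟪b i, x⟫_ℂ * ⟪x, b i⟫_ℂ = ((‖⟪x, b i⟫_ℂ‖ ^ 2 : ℝ) : ℂ) := by
    rw [← inner_conj_symm (b i) x, Complex.conj_mul']
    push_cast
    rfl
  rw [inner_smul_right, mul_right_comm, h, ← Complex.ofReal_mul, Complex.ofReal_re]

/-- An affine inequality between the eigenvalues of two operators that are diagonal in the same
orthonormal basis passes to their expectations in any unit vector. -/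
theorem OrthonormalBasis.sub_re_inner_map_self_le
    {E : Type*} [NormedAddCommGroup E] [InnerProductSpace ℂ E] {ι : Type*} [Fintype ι]
    (b : OrthonormalBasis ι ℂ E) (A B : E →ₗ[ℂ] E) (a c : ι → ℝ)
    (hA : ∀ i, A (b i) = (a i : ℂ) • b i) (hB : ∀ i, B (b i) = (c i : ℂ) • b i)
    {a₀ c₀ r : ℝ} (h : ∀ i, c₀ - c i ≤ r * (a i - a₀)) {x : E} (hx : ‖x‖ = 1) :
    c₀ - (⟪x, B x⟫_ℂ).re ≤ r * ((⟪x, A x⟫_ℂ).re - a₀) := by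
  have hsum : ∑ i, ‖⟪x, b i⟫_ℂ‖ ^ 2 = 1 := by
    rw [b.sum_sq_norm_inner_left, hx, one_pow]
  have key := Finset.sum_le_sum fun i (_ : i ∈ Finset.univ) =>
    mul_le_mul_of_nonneg_left (h i) (sq_nonneg ‖⟪x, b i⟫_ℂ‖)
  simp only [mul_sub, mul_left_comm _ r, Finset.sum_sub_distrib, ← Finset.sum_mul,
    ← Finset.mul_sum, hsum] at key
  rw [b.re_inner_map_self_eq_sum A a hA, b.re_inner_map_self_eq_sum B c hB]
  linarith

/-- Abstract form of the main Theorem's lower bound (diagonal-ensemble version):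
if every joint eigenstate of the noninteracting Hamiltonian `H⁰` and the
momentum `P` (with eigenvalues `ε_α`, `p_α`) satisfies
`p0 − p_α ≤ λ (ε_α − ε₀)`, where `ψ` is a unit joint eigenvector with
eigenvalues `ε₀`, `p0`, then the diagonal-ensemble impurity momentum
`p_∞ = ∑_j |⟨ψ, Ψ_j⟩|² ⟨Ψ_j, P Ψ_j⟩` built from an eigenbasis `(Ψ_j)` of
`H = H⁰ + V` satisfies
`p_∞ ≥ p0 − λ (⟨ψ, V ψ⟩ − ∑_j |⟨ψ, Ψ_j⟩|² ⟨Ψ_j, V Ψ_j⟩)`. -/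
theorem diagonal_ensemble_lower_bound
    {E : Type*} [NormedAddCommGroup E] [InnerProductSpace ℂ E]
    [FiniteDimensional ℂ E]
    {ι ι' : Type*} [Fintype ι] [Fintype ι']
    (H0 V P H : E →ₗ[ℂ] E)
    (hH0 : LinearMap.IsSymmetric H0)
    (hV : LinearMap.IsSymmetric V)
    (hP : LinearMap.IsSymmetric P)
    (hH : H = H0 + V)
    (e : OrthonormalBasis ι ℂ E) (ε p : ι → ℝ)
    (he_H0 : ∀ α, H0 (e α) = (ε α : ℂ) • e α)
    (he_P : ∀ α, P (e α) = (p α : ℂ) • e α)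
    (ψ : E) (hψ : ‖ψ‖ = 1) (ε0 p0 : ℝ)
    (hψ_H0 : H0 ψ = (ε0 : ℂ) • ψ)
    (hψ_P : P ψ = (p0 : ℂ) • ψ)
    (lam : ℝ) (hlam : 0 < lam)
    (hbound : ∀ α, p0 - p α ≤ lam * (ε α - ε0))
    (Ψ : OrthonormalBasis ι' ℂ E) (Ej : ι' → ℝ)
    (hΨ : ∀ j, H (Ψ j) = (Ej j : ℂ) • Ψ j) :
    p0 - lam * ((⟪ψ, V ψ⟫_ℂ).re
        - ∑ j, ‖⟪ψ, Ψ j⟫_ℂ‖ ^ 2 * (⟪Ψ j, V (Ψ j)⟫_ℂ).re)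
      ≤ ∑ j, ‖⟪ψ, Ψ j⟫_ℂ‖ ^ 2 * (⟪Ψ j, P (Ψ j)⟫_ℂ).re := by
  have hself : ∀ (x : E) (r : ℝ), ‖x‖ = 1 → (⟪x, (r : ℂ) • x⟫_ℂ).re = r := by
    intro x r hx
    simp [inner_self_eq_norm_sq_to_K, hx]
  have hsum : ∑ j, ‖⟪ψ, Ψ j⟫_ℂ‖ ^ 2 = 1 := by
    rw [Ψ.sum_sq_norm_inner_left, hψ, one_pow]
  have henergy : ∑ j, ‖⟪ψ, Ψ j⟫_ℂ‖ ^ 2 * Ej j = ε0 + (⟪ψ, V ψ⟫_ℂ).re := by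
    rw [← Ψ.re_inner_map_self_eq_sum H Ej hΨ, hH, LinearMap.add_apply, inner_add_right,
      Complex.add_re, hψ_H0, hself ψ ε0 hψ]
  have hH0Ψ : ∀ j, (⟪Ψ j, H0 (Ψ j)⟫_ℂ).re = Ej j - (⟪Ψ j, V (Ψ j)⟫_ℂ).re := by
    intro j
    have h := hself (Ψ j) (Ej j) (Ψ.norm_eq_one j)
    rw [← hΨ j, hH, LinearMap.add_apply, inner_add_right, Complex.add_re] at h
    linarith
  have key := Finset.sum_le_sum fun j (_ : j ∈ Finset.univ) =>
    mul_le_mul_of_nonneg_left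
      (e.sub_re_inner_map_self_le H0 P ε p he_H0 he_P hbound (Ψ.norm_eq_one j))
      (sq_nonneg ‖⟪ψ, Ψ j⟫_ℂ‖)
  simp only [hH0Ψ, mul_sub, mul_left_comm _ lam, Finset.sum_sub_distrib, ← Finset.sum_mul,
    ← Finset.mul_sum, hsum, henergy] at key
  linarith
end
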